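/- Let λ(θ) be a differentiable family in (0,∞)^p with ∑_{k=1}^p ∂ log λ_k/∂θ_m = 0 for each m (e.g. when ∏_k λ_k(θ) ≡ 1), and R(θ) = Q D_{λ(θ)} Q*. Then every diagonal entry of R^{−1} (∂R/∂θ_m) is zero, and consequently, for Σ(θ,α) = D_α R(θ) D_α, the cross Fisher components vanish: (1/2) tr( Σ^{−1} (∂Σ/∂α_i) Σ^{−1} (∂Σ/∂θ_m) ) = 0 for all i and m. -/

import Mathlib

open Matrix Complex

/-- Left multiplication by a diagonal matrix keeps a zero diagonal, so the trace vanishes. -/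
theorem trace_diagonal_mul_eq_zero {n : Type*} [Fintype n] [DecidableEq n] (e : n → ℂ)
    {M : Matrix n n ℂ} (hM : ∀ i, M i i = 0) : (diagonal e * M).trace = 0 := by
  simp [Matrix.trace, diagonal_mul, hM]

/-- The cross trace of a scaled family `A R A`, with `A = diagonal a` perturbed along `diagonal e`
and `R` along `S`, vanishes as soon as `R⁻¹ S` and `S R⁻¹` have zero diagonal. -/
theorem trace_scaled_cross_eq_zero {n : Type*} [Fintype n] [DecidableEq n] {a : n → ℂ}
    (ha : ∀ i, a i ≠ 0) (e : n → ℂ) {R T S : Matrix n n ℂ} (hRT : R * T = 1)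
    (hTS : ∀ i, (T * S) i i = 0) (hST : ∀ i, (S * T) i i = 0) :
    ((diagonal a * R * diagonal a)⁻¹
        * (diagonal e * R * diagonal a + diagonal a * R * diagonal e)
        * (diagonal a * R * diagonal a)⁻¹ * (diagonal a * S * diagonal a)).trace = 0 := by
  have hTR : T * R = 1 := mul_eq_one_comm.mp hRT
  set A := diagonal a with hA
  set B := diagonal (fun i => (a i)⁻¹) with hB
  set E := diagonal e with hE
  have hAB : A * B = 1 := by simp [hA, hB, ha]
  have hBA : B * A = 1 := mul_eq_one_comm.mp hAB
  have hinv : (A * R * A)⁻¹ = B * T * B := by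
    refine inv_eq_right_inv ?_
    calc A * R * A * (B * T * B) = A * R * (A * B) * T * B := by noncomm_ring
      _ = A * (R * T) * B := by rw [hAB]; noncomm_ring
      _ = 1 := by rw [hRT, mul_one, hAB]
  have hsplit : (A * R * A)⁻¹ * (E * R * A + A * R * E) * (A * R * A)⁻¹ * (A * S * A)
      = B * (T * (B * E) * S) * A + B * (E * B * (T * S)) * A := by
    rw [hinv]
    calc B * T * B * (E * R * A + A * R * E) * (B * T * B) * (A * S * A)
        = B * T * B * E * R * (A * B) * T * (B * A) * S * A
          + B * T * (B * A) * R * E * B * T * (B * A) * S * A := by noncomm_ring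
      _ = B * T * B * E * (R * T) * S * A + B * (T * R) * E * B * T * S * A := by
          rw [hAB, hBA]; noncomm_ring
      _ = _ := by rw [hRT, hTR]; noncomm_ring
  have hconj : ∀ X : Matrix n n ℂ, (B * X * A).trace = X.trace := fun X => by
    rw [trace_mul_cycle, hAB, one_mul]
  rw [hsplit, trace_add, hconj, hconj, trace_mul_cycle, Matrix.trace_mul_comm, hB, hE,
    diagonal_mul_diagonal, diagonal_mul_diagonal, trace_diagonal_mul_eq_zero _ hST,
    trace_diagonal_mul_eq_zero _ hTS, add_zero]

/-- The entry of `U D Uᴴ` for a diagonal `D`. -/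
theorem mul_diagonal_mul_conjTranspose_apply {n : Type*} [Fintype n] [DecidableEq n]
    (U : Matrix n n ℂ) (c : n → ℂ) (a b : n) :
    (U * diagonal c * Uᴴ) a b = ∑ k, U a k * star (U b k) * c k := by
  rw [mul_apply]
  simp only [mul_diagonal, conjTranspose_apply]
  exact Finset.sum_congr rfl fun k _ => by ring

/-- If `U` has orthonormal columns, the matrices `U D Uᴴ` multiply like diagonal matrices. -/
theorem conj_diagonal_mul_conj_diagonal {n : Type*} [Fintype n] [DecidableEq n]
    {U : Matrix n n ℂ} (hU : Uᴴ * U = 1) (c e : n → ℂ) :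
    (U * diagonal c * Uᴴ) * (U * diagonal e * Uᴴ) = U * diagonal (fun k => c k * e k) * Uᴴ := by
  calc (U * diagonal c * Uᴴ) * (U * diagonal e * Uᴴ)
      = U * diagonal c * (Uᴴ * U) * diagonal e * Uᴴ := by simp only [Matrix.mul_assoc]
    _ = _ := by rw [hU, Matrix.mul_one, Matrix.mul_assoc U, diagonal_mul_diagonal]

theorem hasFDerivAt_sum_const_mul_ofReal {E ι : Type*} [NormedAddCommGroup E] [NormedSpace ℝ E]
    [Fintype ι] (c : ι → ℂ) {f : E → ι → ℝ} {x : E}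
    (hf : ∀ k, DifferentiableAt ℝ (fun y => f y k) x) :
    HasFDerivAt (fun y => ∑ k, c k * (f y k : ℂ))
      (∑ k, c k • Complex.ofRealCLM.comp (fderiv ℝ (fun y => f y k) x)) x :=
  HasFDerivAt.fun_sum fun k _ =>
    (Complex.ofRealCLM.hasFDerivAt.comp x (hf k).hasFDerivAt).const_mul (c k)

/-- The discrete Fourier matrix has orthonormal rows. -/
theorem fourier_mul_conjTranspose {p : ℕ} (hp : p ≠ 0) {ω : ℂ} (hω : IsPrimitiveRoot ω p)
    {Q : Matrix (Fin p) (Fin p) ℂ}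
    (hQ : ∀ j k : Fin p, Q j k = ω ^ ((j : ℕ) * (k : ℕ)) / Real.sqrt p) :
    Q * Qᴴ = 1 := by
  have hconj : star ω = ω⁻¹ := (Complex.inv_eq_conj (hω.norm'_eq_one hp)).symm
  have hsqrt : (Real.sqrt p : ℂ) * Real.sqrt p = p := by
    rw [← Complex.ofReal_mul, Real.mul_self_sqrt (Nat.cast_nonneg p), Complex.ofReal_natCast]
  have hω0 : ω ≠ 0 := hω.ne_zero hp
  have hpC : (p : ℂ) ≠ 0 := Nat.cast_ne_zero.mpr hp
  ext j k
  have hterm : ∀ l : Fin p, Q j l * Qᴴ l k = (ω ^ (j : ℕ) / ω ^ (k : ℕ)) ^ (l : ℕ) / p := by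
    intro l
    rw [conjTranspose_apply, hQ, hQ, star_div₀, star_pow, hconj, div_mul_div_comm]
    have : star (Real.sqrt p : ℂ) = Real.sqrt p := Complex.conj_ofReal _
    rw [this, hsqrt, div_pow, ← pow_mul, ← pow_mul, inv_pow, ← div_eq_mul_inv]
  rw [mul_apply, Finset.sum_congr rfl fun l _ => hterm l, ← Finset.sum_div,
    Fin.sum_univ_eq_sum_range (fun l => (ω ^ (j : ℕ) / ω ^ (k : ℕ)) ^ l)]
  rcases eq_or_ne j k with rfl | hjk
  · simp [div_self (pow_ne_zero _ hω0), div_self hpC]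
  · have hne : ω ^ (j : ℕ) / ω ^ (k : ℕ) ≠ 1 := fun h =>
      hjk (Fin.ext (hω.pow_inj j.2 k.2 ((div_eq_one_iff_eq (pow_ne_zero _ hω0)).mp h)))
    have hpow : (ω ^ (j : ℕ) / ω ^ (k : ℕ)) ^ p = 1 := by
      rw [div_pow, ← pow_mul, ← pow_mul, mul_comm, mul_comm (k : ℕ), pow_mul, pow_mul,
        hω.pow_eq_one, one_pow, one_pow, div_one]
    rw [geom_sum_eq hne, hpow, sub_self, zero_div, zero_div, one_apply_ne hjk]

/-- Every entry of the discrete Fourier matrix has squared modulus `1 / p`. -/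
theorem fourier_mul_star_self {p : ℕ} (hp : p ≠ 0) {ω : ℂ} (hω : IsPrimitiveRoot ω p)
    {Q : Matrix (Fin p) (Fin p) ℂ}
    (hQ : ∀ j k : Fin p, Q j k = ω ^ ((j : ℕ) * (k : ℕ)) / Real.sqrt p) (j k : Fin p) :
    Q j k * star (Q j k) = (p : ℂ)⁻¹ := by
  have hnorm : ‖Q j k‖ ^ 2 = (p : ℝ)⁻¹ := by
    rw [hQ, norm_div, norm_pow, hω.norm'_eq_one hp, one_pow, Complex.norm_real, Real.norm_eq_abs,
      div_pow, sq_abs, Real.sq_sqrt (Nat.cast_nonneg p), one_pow, one_div]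
  have := Complex.mul_conj' (Q j k)
  rw [← Complex.ofReal_pow, hnorm, Complex.ofReal_inv, Complex.ofReal_natCast] at this
  exact this

/-- If `∑_k ∂ log λ_k/∂θ_m = 0` for each `m` (e.g. when `∏_k λ_k(θ) ≡ 1`), then
every diagonal entry of `R⁻¹ ∂R/∂θ_m` vanishes for `R(θ) = Q D_{λ(θ)} Qᴴ`, and
the cross Fisher components vanish:
`(1/2) tr(Σ⁻¹ ∂Σ/∂α_i Σ⁻¹ ∂Σ/∂θ_m) = 0` for `Σ(θ,α) = D_α R(θ) D_α`. -/
theorem stmt_9 (p d : ℕ) (hp : 2 ≤ p)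
    (ω : ℂ) (hω : ω = Complex.exp (2 * Real.pi * Complex.I / p))
    (Q : Matrix (Fin p) (Fin p) ℂ)
    (hQ : ∀ j k : Fin p, Q j k = ω ^ ((j : ℕ) * (k : ℕ)) / Real.sqrt p)
    (lam : (Fin d → ℝ) → Fin p → ℝ)
    (hpos : ∀ θ k, 0 < lam θ k)
    (hdiff : ∀ k, Differentiable ℝ fun θ => lam θ k)
    (hsum : ∀ θ (m : Fin d),
      ∑ k : Fin p, fderiv ℝ (fun θ' => Real.log (lam θ' k)) θ (Pi.single m 1) = 0)
    (R : (Fin d → ℝ) → Matrix (Fin p) (Fin p) ℂ)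
    (hRdef : ∀ θ, R θ = Q * Matrix.diagonal (fun k => (lam θ k : ℂ)) * Qᴴ)
    (dR : Fin d → (Fin d → ℝ) → Matrix (Fin p) (Fin p) ℂ)
    (hdR : ∀ m θ a b, dR m θ a b = fderiv ℝ (fun θ' => R θ' a b) θ (Pi.single m 1))
    (Sigm : (Fin d → ℝ) → (Fin p → ℝ) → Matrix (Fin p) (Fin p) ℂ)
    (hSigm : ∀ θ α, Sigm θ α =
      Matrix.diagonal (fun i => (α i : ℂ)) * R θ * Matrix.diagonal (fun i => (α i : ℂ)))
    (dSigα : Fin p → (Fin d → ℝ) → (Fin p → ℝ) → Matrix (Fin p) (Fin p) ℂ)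
    (hdSigα : ∀ i θ α a b,
      dSigα i θ α a b = fderiv ℝ (fun α' => Sigm θ α' a b) α (Pi.single i 1))
    (dSigθ : Fin d → (Fin d → ℝ) → (Fin p → ℝ) → Matrix (Fin p) (Fin p) ℂ)
    (hdSigθ : ∀ m θ α a b,
      dSigθ m θ α a b = fderiv ℝ (fun θ' => Sigm θ' α a b) θ (Pi.single m 1)) :
    (∀ θ (m : Fin d) (i : Fin p), ((R θ)⁻¹ * dR m θ) i i = 0) ∧
    (∀ θ (α : Fin p → ℝ), (∀ i, 0 < α i) → ∀ (i : Fin p) (m : Fin d),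
      (1 / 2 : ℂ) *
        ((Sigm θ α)⁻¹ * dSigα i θ α * (Sigm θ α)⁻¹ * dSigθ m θ α).trace = 0) := by
  have hp0 : p ≠ 0 := by omega
  have hprim : IsPrimitiveRoot ω p := hω ▸ Complex.isPrimitiveRoot_exp p hp0
  have hQQ : Q * Qᴴ = 1 := fourier_mul_conjTranspose hp0 hprim hQ
  have hQ' : Qᴴ * Q = 1 := mul_eq_one_comm.mp hQQ
  have hRentry : ∀ θ a b, R θ a b = ∑ k, Q a k * star (Q b k) * (lam θ k : ℂ) := fun θ a b => by
    rw [hRdef, mul_diagonal_mul_conjTranspose_apply]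
  have hRderiv : ∀ θ a b, HasFDerivAt (fun θ' => R θ' a b) _ θ := fun θ a b => by
    simp only [hRentry]
    exact hasFDerivAt_sum_const_mul_ofReal (fun k => Q a k * star (Q b k))
      fun k => (hdiff k).differentiableAt
  set T : (Fin d → ℝ) → Matrix (Fin p) (Fin p) ℂ := fun θ =>
    Q * diagonal (fun k => ((lam θ k : ℂ))⁻¹) * Qᴴ with hT
  have hlam : ∀ θ k, (lam θ k : ℂ) ≠ 0 := fun θ k => Complex.ofReal_ne_zero.mpr (hpos θ k).ne'
  have hRT : ∀ θ, R θ * T θ = 1 := fun θ => by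
    simp [hT, hRdef, conj_diagonal_mul_conj_diagonal hQ', hlam, hQQ]
  have hdRdef : ∀ m θ, dR m θ = Q * diagonal (fun k =>
      ((fderiv ℝ (fun θ' => lam θ' k) θ (Pi.single m 1) : ℝ) : ℂ)) * Qᴴ := fun m θ => by
    ext a b
    rw [hdR, (hRderiv θ a b).fderiv, mul_diagonal_mul_conjTranspose_apply]
    simp
  have hdiag : ∀ θ (m : Fin d) (c : Fin p → ℂ), (∀ k, c k =
      ((fderiv ℝ (fun θ' => Real.log (lam θ' k)) θ (Pi.single m 1) : ℝ) : ℂ)) →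
      ∀ i, (Q * diagonal c * Qᴴ) i i = 0 := fun θ m c hc i => by
    simp only [mul_diagonal_mul_conjTranspose_apply, fourier_mul_star_self hp0 hprim hQ, hc]
    rw [← Finset.mul_sum, ← Complex.ofReal_sum, hsum, Complex.ofReal_zero, mul_zero]
  have hlog : ∀ θ (m : Fin d) k,
      ((fderiv ℝ (fun θ' => Real.log (lam θ' k)) θ (Pi.single m 1) : ℝ) : ℂ)
        = (lam θ k : ℂ)⁻¹ * (fderiv ℝ (fun θ' => lam θ' k) θ (Pi.single m 1) : ℝ) :=
    fun θ m k => by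
      rw [fderiv.log (hdiff k).differentiableAt (hpos θ k).ne']
      simp
  have hTS : ∀ θ m i, (T θ * dR m θ) i i = 0 := fun θ m i => by
    rw [hT, hdRdef, conj_diagonal_mul_conj_diagonal hQ']
    exact hdiag θ m _ (fun k => (hlog θ m k).symm) i
  have hST : ∀ θ m i, (dR m θ * T θ) i i = 0 := fun θ m i => by
    rw [hT, hdRdef, conj_diagonal_mul_conj_diagonal hQ']
    exact hdiag θ m _ (fun k => by rw [hlog, mul_comm]) i
  refine ⟨fun θ m i => by rw [inv_eq_right_inv (hRT θ), hTS], fun θ α hα i m => ?_⟩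
  have hSentry : ∀ θ α a b, Sigm θ α a b = (α a : ℂ) * R θ a b * (α b : ℂ) :=
    fun θ α a b => by rw [hSigm, mul_diagonal, diagonal_mul]
  have hθ : dSigθ m θ α = diagonal (fun i => (α i : ℂ)) * dR m θ
      * diagonal (fun i => (α i : ℂ)) := by
    ext a b
    rw [hdSigθ, mul_diagonal, diagonal_mul, hdR, (hRderiv θ a b).fderiv]
    simp only [hSentry]
    rw [(((hRderiv θ a b).const_mul (α a : ℂ)).mul_const (α b : ℂ)).fderiv]
    simp only [_root_.smul_apply, smul_eq_mul]
    ring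
  have hcoord : ∀ a, HasFDerivAt (fun α' : Fin p → ℝ => (α' a : ℂ))
      (Complex.ofRealCLM.comp (ContinuousLinearMap.proj a)) α := fun a =>
    (Complex.ofRealCLM.comp
      (ContinuousLinearMap.proj (R := ℝ) (φ := fun _ : Fin p => ℝ) a)).hasFDerivAt
  have hαd : dSigα i θ α
      = diagonal (fun k => ((Pi.single i (1 : ℝ) : Fin p → ℝ) k : ℂ)) * R θ
          * diagonal (fun i => (α i : ℂ))
        + diagonal (fun i => (α i : ℂ)) * R θ
          * diagonal (fun k => ((Pi.single i (1 : ℝ) : Fin p → ℝ) k : ℂ)) := by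
    ext a b
    rw [hdSigα, Matrix.add_apply, mul_diagonal, diagonal_mul, mul_diagonal, diagonal_mul]
    simp only [hSentry]
    rw [(((hcoord a).mul_const (R θ a b)).fun_mul (hcoord b)).fderiv]
    simp only [_root_.add_apply, _root_.smul_apply, smul_eq_mul,
      ContinuousLinearMap.comp_apply, ContinuousLinearMap.proj_apply, Complex.ofRealCLM_apply]
    ring
  rw [hαd, hθ, hSigm, trace_scaled_cross_eq_zero
    (fun i => Complex.ofReal_ne_zero.mpr (hα i).ne') _ (hRT θ) (hTS θ m) (hST θ m), mul_zero]
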